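/- If |γ| ≤ S(ε_c), then z = 0 is a minimizer over ℝ of the function G. -/

import Mathlib

open Finset Filter

noncomputable section

/-- The sign of a real number, with the convention `sgn 0 = 1`. -/
def sgn (t : ℝ) : ℝ := if t < 0 then -1 else 1

/-- A permutation sorting the absolute values of `β` in nonincreasing order. -/
def sortPerm {p : ℕ} (β : Fin p → ℝ) : Equiv.Perm (Fin p) :=
  (Fin.revPerm).trans (Tuple.sort fun j => |β j|)

/-- The sorted ℓ₁ norm `J(β) = Σ_j λ_j |β|_(j)`. -/
def sortedL1 {p : ℕ} (lam β : Fin p → ℝ) : ℝ :=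
  ∑ j, lam j * |β (sortPerm β j)|

/-- `β(z)`: the vector obtained from `β` by replacing entries of the cluster
`{i : |β i| = ck}` by `sign(β i) * z`. -/
def cupd {p : ℕ} (β : Fin p → ℝ) (ck z : ℝ) : Fin p → ℝ :=
  fun i => if |β i| = ck then sgn (β i) * z else β i

/-- The partial sorted ℓ₁ norm `H(z) = J(β(z))`. -/
def Hfun {p : ℕ} (lam β : Fin p → ℝ) (ck : ℝ) (z : ℝ) : ℝ :=
  sortedL1 lam (cupd β ck z)

/-- `S(w) = Σ_{j ∈ C(w)} λ_{(j)⁻_w}`, where `C(w) = {j : |β(w)_j| = |w|}`. -/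
def Sval {p : ℕ} (lam β : Fin p → ℝ) (ck : ℝ) (w : ℝ) : ℝ :=
  ∑ j, if |cupd β ck w j| = |w| then lam ((sortPerm (cupd β ck w))⁻¹ j) else 0

/-- squared Euclidean norm -/
def sqnorm {n : ℕ} (v : Fin n → ℝ) : ℝ := ∑ i, (v i) ^ 2

/-- `G(z) = (1/2)‖y − Xβ(z)‖² + H(z)`. -/
def Gfun {n p : ℕ} (lam : Fin p → ℝ) (X : Matrix (Fin n) (Fin p) ℝ) (y : Fin n → ℝ)
    (β : Fin p → ℝ) (ck : ℝ) (z : ℝ) : ℝ :=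
  (1/2) * sqnorm (fun i => y i - ∑ j, X i j * cupd β ck z j) + Hfun lam β ck z

/-- `x̃ = Σ_{j ∈ C_k} sign(β_j) X_{:j}`. -/
def xtil {n p : ℕ} (X : Matrix (Fin n) (Fin p) ℝ) (β : Fin p → ℝ) (ck : ℝ) : Fin n → ℝ :=
  fun i => ∑ j, if |β j| = ck then sgn (β j) * X i j else 0

/-- `γ = c_k ω + x̃ᵀ r` where `r = y − Xβ` and `ω = ‖x̃‖²`. -/
def gam {n p : ℕ} (X : Matrix (Fin n) (Fin p) ℝ) (y : Fin n → ℝ) (β : Fin p → ℝ) (ck : ℝ) : ℝ :=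
  ck * sqnorm (xtil X β ck) + ∑ i, xtil X β ck i * (y i - ∑ j, X i j * β j)

end

/-!
As a function of `z`, the squared loss is a parabola whose slope at `0` is `-γ`. For the penalty,
`J(v) = max_τ Σ_j λ_j |v_{τ(j)}|` by the rearrangement inequality, and a permutation `σ` sorting
`|β(ε)|` also sorts `|β(0)|`, since no entry outside the cluster has absolute value in `(0, ε]`.
Bounding `H(w)` from below by the value at `τ = σ` gives `H(w) ≥ H(0) + |w| S(ε)`, and this slope
absorbs the linear term `-γ w` as soon as `|γ| ≤ S(ε)`.
-/

lemma abs_sgn (t : ℝ) : |sgn t| = 1 := by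
  unfold sgn; split_ifs <;> simp

lemma sgn_mul_abs (t : ℝ) : sgn t * |t| = t := by
  unfold sgn
  split_ifs with h
  · rw [abs_of_neg h, neg_mul_neg, one_mul]
  · rw [abs_of_nonneg (not_lt.mp h), one_mul]

lemma sum_mul_comp_perm_le_of_monovary {ι R : Type*} [Fintype ι] [Semiring R] [LinearOrder R]
    [IsStrictOrderedRing R] [ExistsAddOfLE R] {f g : ι → R} {σ : Equiv.Perm ι}
    (h : Monovary f (g ∘ σ)) (τ : Equiv.Perm ι) :
    ∑ j, f j * g (τ j) ≤ ∑ j, f j * g (σ j) := by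
  simpa using h.sum_mul_comp_perm_le_sum_mul (σ := τ.trans σ.symm)

section SortedL1

variable {p : ℕ}

lemma antitone_abs_comp_sortPerm (v : Fin p → ℝ) : Antitone fun j => |v (sortPerm v j)| :=
  fun _ _ hij => Tuple.monotone_sort (fun j => |v j|) (Fin.rev_le_rev.mpr hij)

lemma sortedL1_eq_sum_of_antitone (lam : Fin p → ℝ) {v : Fin p → ℝ} {σ : Equiv.Perm (Fin p)}
    (hσ : Antitone fun j => |v (σ j)|) : sortedL1 lam v = ∑ j, lam j * |v (σ j)| := by
  have hsort : (fun j => |v j|) ∘ sortPerm v = (fun j => |v j|) ∘ σ :=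
    Tuple.unique_antitone (antitone_abs_comp_sortPerm v) hσ
  exact Finset.sum_congr rfl fun j _ => congrArg (lam j * ·) (congrFun hsort j)

lemma sum_mul_abs_comp_perm_le_sortedL1 {lam : Fin p → ℝ} (hlam : Antitone lam)
    (v : Fin p → ℝ) (σ : Equiv.Perm (Fin p)) :
    ∑ j, lam j * |v (σ j)| ≤ sortedL1 lam v :=
  sum_mul_comp_perm_le_of_monovary (g := fun j => |v j|)
    (hlam.monovary (antitone_abs_comp_sortPerm v)) σ

end SortedL1

section ClusterUpdate

variable {p : ℕ} {β : Fin p → ℝ} {ck z w : ℝ}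

lemma abs_cupd (β : Fin p → ℝ) (ck z : ℝ) (j : Fin p) :
    |cupd β ck z j| = if |β j| = ck then |z| else |β j| := by
  unfold cupd
  split_ifs <;> simp [abs_mul, abs_sgn]

lemma abs_cupd_eq_abs_iff (hw : ∀ j, |β j| ≠ ck → |β j| ≠ |w|) (j : Fin p) :
    |cupd β ck w j| = |w| ↔ |β j| = ck := by
  rw [abs_cupd]
  split_ifs with hj
  · exact iff_of_true rfl hj
  · exact iff_of_false (hw j hj) hj

lemma abs_cupd_le_abs_cupd_of_gap (hzw : |z| ≤ |w|)
    (hgap : ∀ j, |β j| ≠ ck → |β j| ∉ Set.Ioc |z| |w|) {i j : Fin p}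
    (h : |cupd β ck w i| ≤ |cupd β ck w j|) : |cupd β ck z i| ≤ |cupd β ck z j| := by
  simp only [abs_cupd] at h ⊢
  split_ifs at h ⊢ with hi hj hj
  · exact le_rfl
  · exact hzw.trans h
  · exact not_lt.mp fun hlt => hgap i hi ⟨hlt, h⟩
  · exact h

lemma Sval_eq_sum_filter (lam : Fin p → ℝ) (hw : ∀ j, |β j| ≠ ck → |β j| ≠ |w|) :
    Sval lam β ck w = ∑ j with |β (sortPerm (cupd β ck w) j)| = ck, lam j := by
  simp only [Sval, abs_cupd_eq_abs_iff hw]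
  rw [← Equiv.sum_comp (sortPerm (cupd β ck w)), Finset.sum_filter]
  simp only [Equiv.Perm.inv_def, Equiv.symm_apply_apply]

lemma sum_mul_abs_cupd_comp_perm (lam β : Fin p → ℝ) (ck z w : ℝ) (σ : Equiv.Perm (Fin p)) :
    ∑ j, lam j * |cupd β ck w (σ j)| =
      ∑ j, lam j * |cupd β ck z (σ j)| + (|w| - |z|) * ∑ j with |β (σ j)| = ck, lam j := by
  rw [Finset.sum_filter, Finset.mul_sum, ← Finset.sum_add_distrib]
  refine Finset.sum_congr rfl fun j _ => ?_
  simp only [abs_cupd]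
  split_ifs <;> ring

lemma Hfun_add_mul_Sval_le {lam : Fin p → ℝ} (hlam : Antitone lam) (hzw : |z| < |w|)
    (hgap : ∀ j, |β j| ≠ ck → |β j| ∉ Set.Ioc |z| |w|) (u : ℝ) :
    Hfun lam β ck z + (|u| - |z|) * Sval lam β ck w ≤ Hfun lam β ck u := by
  set σ := sortPerm (cupd β ck w)
  have hσ : Antitone fun j => |cupd β ck z (σ j)| := fun _ _ hij =>
    abs_cupd_le_abs_cupd_of_gap hzw.le hgap (antitone_abs_comp_sortPerm (cupd β ck w) hij)
  have hw : ∀ j, |β j| ≠ ck → |β j| ≠ |w| := fun j hj heq =>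
    hgap j hj ⟨heq ▸ hzw, heq.le⟩
  calc Hfun lam β ck z + (|u| - |z|) * Sval lam β ck w
      = ∑ j, lam j * |cupd β ck u (σ j)| := by
        rw [Hfun, sortedL1_eq_sum_of_antitone lam hσ, Sval_eq_sum_filter lam hw,
          sum_mul_abs_cupd_comp_perm lam β ck z u σ]
    _ ≤ Hfun lam β ck u := sum_mul_abs_comp_perm_le_sortedL1 hlam _ σ

end ClusterUpdate

section LeastSquares

open scoped Matrix

lemma sqnorm_eq_dotProduct {n : ℕ} (v : Fin n → ℝ) : sqnorm v = v ⬝ᵥ v :=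
  Finset.sum_congr rfl fun i _ => sq (v i)

lemma sqnorm_nonneg {n : ℕ} (v : Fin n → ℝ) : 0 ≤ sqnorm v :=
  Finset.sum_nonneg fun i _ => sq_nonneg (v i)

variable {n p : ℕ} (X : Matrix (Fin n) (Fin p) ℝ) (y : Fin n → ℝ) (β : Fin p → ℝ) (ck : ℝ)

lemma mulVec_cupd (z : ℝ) : X *ᵥ cupd β ck z = X *ᵥ β + (z - ck) • xtil X β ck := by
  ext i
  simp only [Matrix.mulVec, dotProduct, xtil, cupd, Pi.add_apply, Pi.smul_apply, smul_eq_mul]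
  rw [Finset.mul_sum, ← Finset.sum_add_distrib]
  refine Finset.sum_congr rfl fun j _ => ?_
  split_ifs with hj
  · have hβj : sgn (β j) * ck = β j := hj ▸ sgn_mul_abs (β j)
    linear_combination X i j * hβj
  · ring

lemma gam_eq_dotProduct : gam X y β ck = xtil X β ck ⬝ᵥ (y - X *ᵥ cupd β ck 0) :=
  calc gam X y β ck
      = ck * (xtil X β ck ⬝ᵥ xtil X β ck) + xtil X β ck ⬝ᵥ (y - X *ᵥ β) := by
        rw [← sqnorm_eq_dotProduct]; rfl
    _ = xtil X β ck ⬝ᵥ (y - X *ᵥ cupd β ck 0) := by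
        rw [mulVec_cupd]
        simp only [dotProduct_sub, dotProduct_add, dotProduct_smul, smul_eq_mul]
        ring

lemma sqnorm_sub_mulVec_cupd (w : ℝ) :
    sqnorm (y - X *ᵥ cupd β ck w) =
      sqnorm (y - X *ᵥ cupd β ck 0) - 2 * w * gam X y β ck + w ^ 2 * sqnorm (xtil X β ck) := by
  have hres : y - X *ᵥ cupd β ck w = y - X *ᵥ cupd β ck 0 - w • xtil X β ck := by
    rw [mulVec_cupd X β ck w, mulVec_cupd X β ck 0]
    module
  rw [hres, gam_eq_dotProduct]
  simp only [sqnorm_eq_dotProduct, sub_dotProduct, dotProduct_sub, smul_dotProduct,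
    dotProduct_smul, smul_eq_mul, dotProduct_comm _ (xtil X β ck)]
  ring

lemma Gfun_eq (lam : Fin p → ℝ) (w : ℝ) :
    Gfun lam X y β ck w =
      Gfun lam X y β ck 0 - w * gam X y β ck + w ^ 2 * sqnorm (xtil X β ck) / 2
        + (Hfun lam β ck w - Hfun lam β ck 0) := by
  have hG : ∀ z, Gfun lam X y β ck z =
      1 / 2 * sqnorm (y - X *ᵥ cupd β ck z) + Hfun lam β ck z := fun _ => rfl
  rw [hG, hG, sqnorm_sub_mulVec_cupd X y β ck w]
  ring

end LeastSquares

theorem zero_minimizes_G_general {n p : ℕ} {lam : Fin p → ℝ} (hlam : Antitone lam)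
    {β : Fin p → ℝ} {k : Fin p} {ε : ℝ} (hε_pos : 0 < ε)
    (hε_lt : ∀ j, |β j| ≠ |β k| → β j ≠ 0 → ε < |β j|)
    (X : Matrix (Fin n) (Fin p) ℝ) (y : Fin n → ℝ)
    (hγ : |gam X y β (|β k|)| ≤ Sval lam β |β k| ε) (w : ℝ) :
    Gfun lam X y β |β k| 0 ≤ Gfun lam X y β |β k| w := by
  have hgap : ∀ j, |β j| ≠ |β k| → |β j| ∉ Set.Ioc |0| |ε| := by
    rw [abs_zero, abs_of_pos hε_pos]
    exact fun j hj hmem => (hε_lt j hj (abs_pos.mp hmem.1)).not_ge hmem.2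
  have hH : Hfun lam β |β k| 0 + |w| * Sval lam β |β k| ε ≤ Hfun lam β |β k| w := by
    simpa only [abs_zero, sub_zero] using
      Hfun_add_mul_Sval_le hlam (abs_zero.trans_lt (abs_pos.mpr hε_pos.ne')) hgap w
  have hlinear : w * gam X y β |β k| ≤ |w| * Sval lam β |β k| ε :=
    calc w * gam X y β |β k| ≤ |w| * |gam X y β (|β k|)| := (le_abs_self _).trans_eq (abs_mul _ _)
      _ ≤ |w| * Sval lam β |β k| ε := by gcongr
  have hquadratic : 0 ≤ w ^ 2 * sqnorm (xtil X β |β k|) :=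
    mul_nonneg (sq_nonneg w) (sqnorm_nonneg _)
  rw [Gfun_eq X y β |β k| lam w]
  linarith

/-- if `|γ| ≤ S(ε_c)`, then `z = 0` minimizes `G` over ℝ. -/
theorem zero_minimizes_G
    {n p m : ℕ} (hn : 0 < n) (hp : 0 < p) (hm : 0 < m)
    (lam : Fin p → ℝ)
    (hlam_mono : ∀ i j : Fin p, i ≤ j → lam j ≤ lam i)
    (hlam_nonneg : ∀ j, 0 ≤ lam j)
    (β : Fin p → ℝ) (c : Fin m → ℝ)
    (hc_anti : StrictAnti c) (hc_nonneg : ∀ i, 0 ≤ c i)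
    (h_attain : ∀ i, ∃ j, |β j| = c i)
    (h_cover : ∀ j, ∃ i, |β j| = c i)
    (k : Fin m)
    (ε : ℝ) (hε_pos : 0 < ε)
    (hε_sep : ∀ i j, i ≠ j → ε < |c i - c j|)
    (hε_min : ∀ i, c i ≠ 0 → ε < c i)
    (X : Matrix (Fin n) (Fin p) ℝ) (y : Fin n → ℝ)
    (hγ : |gam X y β (c k)| ≤ Sval lam β (c k) ε) :
    ∀ w : ℝ, Gfun lam X y β (c k) 0 ≤ Gfun lam X y β (c k) w := by
  obtain ⟨k, hk⟩ := h_attain k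
  rw [← hk] at hγ ⊢
  refine zero_minimizes_G_general hlam_mono hε_pos (fun j _ hj => ?_) X y hγ
  obtain ⟨i, hi⟩ := h_cover j
  exact hi ▸ hε_min i (hi ▸ abs_ne_zero.mpr hj)
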